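/- arXiv:1508.06881 — 2 statements merged into one kernel-verified Lean document; each statement's English description precedes it below -/
import Mathlib

section
/- Let n ≥ 1 and 1 ≤ r ≤ n. The function f(λ) = H_r(λ)^{1/r} is concave on the Gårding cone Γ_r: for all λ, μ ∈ Γ_r and t ∈ [0,1], f(tλ + (1−t)μ) ≥ t f(λ) + (1−t) f(μ). -/
/-!
The ratios `q_k = S_{k+1} / S_k` are superadditive (being homogeneous of degree one, this is
concavity) on the cone `S_0, …, S_k > 0`, and `S_r = q_0 q_1 ⋯ q_{r-1}`. So `S_r ^ (1/r)` is a
geometric mean of positive superadditive functions, hence superadditive by AM-GM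
(`Garding.rpow_superadd`).

Superadditivity of `q_k` (`Garding.cone_add_and_ratio_superadd`) follows Marcus and Lopes. Write
`S_{k;i}` for `S_k` of the variables other than `x_i`, and `p_i = S_{k;i} / S_{k-1;i}`. Then
`(k+1) q_k = ∑ x_i p_i / (x_i + p_i)`, where each summand is increasing in `p_i` and superadditive
in `(x_i, p_i)` on the half plane `x_i + p_i > 0`; by induction on `k`, `p_i` is superadditive.

This requires that deleting a variable maps `Γ_{k+1}` to `Γ_k` (`Garding.cone_erase`), a
consequence of Newton's inequality `S_k S_{k+2} ≤ S_{k+1}²` for arbitrary real numbers. The latter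
holds for the coefficients of any polynomial with only real roots: by Rolle the derivative again
has only real roots, which reduces it to the three lowest coefficients.
-/



/-- The `r`-th elementary symmetric function of `x : Fin n → ℝ`. -/
def esymm (n r : ℕ) (x : Fin n → ℝ) : ℝ :=
  ∑ s ∈ Finset.powersetCard r (Finset.univ : Finset (Fin n)), ∏ i ∈ s, x i

/-- The Gårding cone `Γ_r = {x ∈ ℝⁿ : S_j(x) > 0 for j = 1, …, r}`. -/
def gardingCone (n r : ℕ) : Set (Fin n → ℝ) :=
  {x | ∀ j : ℕ, 1 ≤ j → j ≤ r → 0 < esymm n j x}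

/-- The normalized curvature function `f(λ) = H_r(λ)^{1/r}`,
where `H_r(λ) = S_r(λ)/C(n,r)`. -/
noncomputable def fcurv (n r : ℕ) (x : Fin n → ℝ) : ℝ :=
  (esymm n r x / (n.choose r : ℝ)) ^ ((1 : ℝ) / r)

namespace Garding

open Polynomial

/-! ### Newton's inequality -/

/-- Rolle's theorem: the derivative of a real-rooted polynomial is real-rooted. -/
lemma splits_derivative {p : ℝ[X]} (hp : p.Splits) : (derivative p).Splits := by
  rw [splits_iff_card_roots] at hp ⊢
  have h1 := card_roots_le_derivative p
  have h2 := natDegree_derivative_le p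
  have h3 := card_roots' (derivative p)
  by_cases h : p.natDegree = 0
  · rw [derivative_of_natDegree_zero h]; simp
  · omega

lemma newton_zero {p : ℝ[X]} (hp : p.Splits) :
    2 * (p.coeff 0 * p.coeff 2) ≤ p.coeff 1 ^ 2 := by
  unfold Splits at hp
  induction hp using Submonoid.closure_induction_left with
  | one => simp [coeff_one]
  | mul_left f hf q hq ih =>
    rcases hf with ⟨a, rfl⟩ | ⟨a, rfl⟩
    · simp only [coeff_C_mul]
      nlinarith [mul_le_mul_of_nonneg_left ih (sq_nonneg a)]
    · have h0 : ((X + C a) * q).coeff 0 = a * q.coeff 0 := by simp [add_mul]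
      have h1 : ((X + C a) * q).coeff 1 = q.coeff 0 + a * q.coeff 1 := by
        simp [add_mul, coeff_X_mul (n := 0)]
      have h2 : ((X + C a) * q).coeff 2 = q.coeff 1 + a * q.coeff 2 := by
        simp [add_mul, coeff_X_mul (n := 1)]
      rw [h0, h1, h2]
      nlinarith [mul_le_mul_of_nonneg_left ih (sq_nonneg a), sq_nonneg (q.coeff 0)]

/-- A form of Newton's inequality whose constants are stable under differentiation. -/
lemma newton_coeff (k : ℕ) : ∀ {p : ℝ[X]}, p.Splits →
    ((k : ℝ) + 2) * (p.coeff k * p.coeff (k + 2)) ≤ (k + 1) * p.coeff (k + 1) ^ 2 := by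
  induction k with
  | zero => intro p hp; simpa using newton_zero hp
  | succ k ih =>
    intro p hp
    have h := ih (splits_derivative hp)
    simp only [coeff_derivative] at h
    push_cast at h ⊢
    have hk : (0 : ℝ) < (k + 1) * (k + 2) := by positivity
    refine le_of_mul_le_mul_left ?_ hk
    ring_nf at h ⊢
    linarith

lemma newton_weak {p : ℝ[X]} (hp : p.Splits) (k : ℕ) :
    p.coeff k * p.coeff (k + 2) ≤ p.coeff (k + 1) ^ 2 := by
  have h := newton_coeff k hp
  have hk : (0 : ℝ) ≤ k := k.cast_nonneg
  by_contra! hc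
  nlinarith [sq_nonneg (p.coeff (k + 1))]

/-! ### Elementary symmetric functions of a subfamily -/

variable {ι : Type*}

/-- The `k`-th elementary symmetric function of the family `(x i)`, `i ∈ s`, encoded as a
coefficient of the real-rooted polynomial `∏ (1 + x i X)`. -/
noncomputable def E (s : Finset ι) (k : ℕ) (x : ι → ℝ) : ℝ :=
  (∏ i ∈ s, (1 + C (x i) * X)).coeff k

lemma E_zero (s : Finset ι) (x : ι → ℝ) : E s 0 x = 1 := by
  simp [E, coeff_zero_eq_eval_zero, eval_prod]

lemma E_newton (s : Finset ι) (k : ℕ) (x : ι → ℝ) :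
    E s k x * E s (k + 2) x ≤ E s (k + 1) x ^ 2 := by
  refine newton_weak (Splits.prod fun i _ => Splits.of_natDegree_le_one ?_) k
  compute_degree

lemma E_succ [DecidableEq ι] {s : Finset ι} {i : ι} (hi : i ∈ s) (k : ℕ) (x : ι → ℝ) :
    E s (k + 1) x = x i * E (s.erase i) k x + E (s.erase i) (k + 1) x := by
  unfold E
  rw [← Finset.mul_prod_erase s _ hi, add_mul, one_mul, mul_assoc, coeff_add, coeff_C_mul,
    coeff_X_mul, add_comm]

/-- Euler's identity for the homogeneous polynomial `E s (k + 1)`. -/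
lemma E_euler [DecidableEq ι] (s : Finset ι) (k : ℕ) (x : ι → ℝ) :
    ((k : ℝ) + 1) * E s (k + 1) x = ∑ i ∈ s, x i * E (s.erase i) k x := by
  unfold E
  rw [mul_comm, ← coeff_derivative, derivative_prod_finset, finsetSum_coeff]
  refine Finset.sum_congr rfl fun i _ => ?_
  simp only [derivative_add, derivative_one, derivative_C_mul, derivative_X, mul_one, zero_add,
    coeff_mul_C]
  rw [mul_comm]

lemma E_one [DecidableEq ι] (s : Finset ι) (x : ι → ℝ) : E s 1 x = ∑ i ∈ s, x i := by
  have h := E_euler s 0 x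
  simpa [E_zero] using h

lemma E_eq_sum (s : Finset ι) (x : ι → ℝ) : ∀ k,
    E s k x = ∑ t ∈ Finset.powersetCard k s, ∏ i ∈ t, x i := by
  intro k
  unfold E
  rw [Finset.prod_one_add, finsetSum_coeff]
  simp only [Finset.prod_mul_distrib, Finset.prod_const, ← map_prod, coeff_C_mul, coeff_X_pow]
  simp only [mul_ite, mul_one, mul_zero]
  rw [← Finset.sum_filter, Finset.powersetCard_eq_filter]
  congr 1
  ext t
  simp [eq_comm]

/-! ### The Gårding cone and deletion of a variable -/

/-- The Gårding cone `Γ_r` in the variables indexed by `s`. The condition at `k = 0` is vacuous,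
since `E s 0 = 1`. -/
def Cone (s : Finset ι) (r : ℕ) (x : ι → ℝ) : Prop := ∀ k ≤ r, 0 < E s k x

lemma Cone.mono {s : Finset ι} {r r' : ℕ} {x : ι → ℝ} (h : Cone s r x) (hr : r' ≤ r) :
    Cone s r' x := fun k hk => h k (hk.trans hr)

/-- Deleting a variable maps `Γ_{r+1}` into `Γ_r`. -/
lemma cone_erase [DecidableEq ι] {s : Finset ι} {i : ι} (hi : i ∈ s) {x : ι → ℝ} (r : ℕ)
    (h : Cone s (r + 1) x) : Cone (s.erase i) r x := by
  induction r with
  | zero =>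
    intro k hk
    obtain rfl : k = 0 := by omega
    simp [E_zero]
  | succ r ih =>
    have ih := ih (h.mono (by omega))
    intro k hk
    rcases Nat.lt_or_ge k (r + 1) with hk' | hk'
    · exact ih k (by omega)
    obtain rfl : k = r + 1 := by omega
    have h1 := h (r + 1) (by omega)
    have h2 := h (r + 1 + 1) le_rfl
    rw [E_succ hi] at h1 h2
    have h0 := ih r le_rfl
    have hN := E_newton (s.erase i) r x
    by_contra! hc
    -- If `S_{r+1;i} ≤ 0`, positivity of `S_{r+1}` and `S_{r+2}` gives
    -- `S_{r;i} S_{r+2;i} > -x_i S_{r;i} S_{r+1;i} ≥ S_{r+1;i}²`, against Newton's inequality.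
    nlinarith [mul_pos h0 h2, mul_nonneg (neg_nonneg.2 hc) h1.le]

/-! ### Superadditivity of the ratios -/

/-- `(a, p) ↦ a p / (a + p)` is superadditive on `a + p > 0` and increasing in `p`. -/
lemma parallel_superadd {a b p q w : ℝ} (ha : 0 < a + p) (hb : 0 < b + q) (hw : p + q ≤ w) :
    a * p / (a + p) + b * q / (b + q) ≤ (a + b) * w / (a + b + w) := by
  have h1 : a * p / (a + p) + b * q / (b + q) ≤ (a + b) * (p + q) / (a + b + (p + q)) := by
    rw [div_add_div _ _ ha.ne' hb.ne', div_le_div_iff₀ (by positivity) (by linarith)]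
    nlinarith [sq_nonneg (a * q - b * p)]
  refine h1.trans ?_
  rw [div_le_div_iff₀ (by linarith) (by linarith)]
  nlinarith [mul_nonneg (sq_nonneg (a + b)) (sub_nonneg.2 hw)]

/-- The ratio `q_k = S_{k+1} / S_k`. -/
noncomputable def Q (s : Finset ι) (k : ℕ) (x : ι → ℝ) : ℝ := E s (k + 1) x / E s k x

/-- The Marcus–Lopes identity expressing `q_{k+1}` through the `q_k` of the subfamilies with one
variable deleted. -/
lemma Q_succ [DecidableEq ι] {s : Finset ι} {k : ℕ} {x : ι → ℝ} (h : Cone s (k + 1) x) :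
    ((k : ℝ) + 2) * Q s (k + 1) x =
      ∑ i ∈ s, x i * Q (s.erase i) k x / (x i + Q (s.erase i) k x) := by
  have he := E_euler s (k + 1) x
  push_cast at he
  have h2 : (k : ℝ) + 2 = k + 1 + 1 := by ring
  rw [Q, ← mul_div_assoc, h2, he, Finset.sum_div]
  refine Finset.sum_congr rfl fun i hi => ?_
  have h0 := cone_erase hi k h k le_rfl
  have h1 := h (k + 1) le_rfl
  rw [E_succ hi] at h1 ⊢
  rw [Q]
  have h3 : x i + E (s.erase i) (k + 1) x / E (s.erase i) k x =
      (x i * E (s.erase i) k x + E (s.erase i) (k + 1) x) / E (s.erase i) k x := by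
    field_simp
  rw [h3, mul_div_assoc', div_div_div_cancel_right₀ h0.ne']

lemma add_Q_pos [DecidableEq ι] {s : Finset ι} {k : ℕ} {x : ι → ℝ} (h : Cone s (k + 1) x) {i : ι} (hi : i ∈ s) :
    0 < x i + Q (s.erase i) k x := by
  have h0 := cone_erase hi k h k le_rfl
  have h1 := h (k + 1) le_rfl
  rw [E_succ hi] at h1
  have h3 : x i + Q (s.erase i) k x =
      (x i * E (s.erase i) k x + E (s.erase i) (k + 1) x) / E (s.erase i) k x := by
    rw [Q]; field_simp
  rw [h3]
  positivity

/-- Convexity of `Γ_k` and superadditivity of `q_k` on it, proved together: `q_k` being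
superadditive and positive on `Γ_{k+1}` is what makes `Γ_{k+1}` closed under addition. -/
lemma cone_add_and_ratio_superadd [DecidableEq ι] (k : ℕ) : ∀ (s : Finset ι) (x y : ι → ℝ),
    Cone s k x → Cone s k y →
      Cone s k (x + y) ∧ Q s k x + Q s k y ≤ Q s k (x + y) := by
  induction k with
  | zero =>
    intro s x y _ _
    refine ⟨fun k hk => ?_, ?_⟩
    · obtain rfl : k = 0 := by omega
      simp [E_zero]
    · simp [Q, E_zero, E_one, Finset.sum_add_distrib]
  | succ k ih =>
    intro s x y hx hy
    obtain ⟨hc, hq⟩ := ih s x y (hx.mono (by omega)) (hy.mono (by omega))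
    have hxy : Cone s (k + 1) (x + y) := by
      intro j hj
      rcases Nat.lt_or_ge j (k + 1) with hj' | hj'
      · exact hc j (by omega)
      obtain rfl : j = k + 1 := by omega
      have h1 : 0 < Q s k x := div_pos (hx _ le_rfl) (hx k (by omega))
      have h2 : 0 < Q s k y := div_pos (hy _ le_rfl) (hy k (by omega))
      have h3 : 0 < Q s k (x + y) := by linarith
      exact (div_pos_iff_of_pos_right (hc k le_rfl)).1 h3
    refine ⟨hxy, ?_⟩
    have hk : (0 : ℝ) < (k : ℝ) + 2 := by positivity
    refine le_of_mul_le_mul_left ?_ hk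
    rw [mul_add, Q_succ hx, Q_succ hy, Q_succ hxy, ← Finset.sum_add_distrib]
    refine Finset.sum_le_sum fun i hi => ?_
    exact parallel_superadd (add_Q_pos hx hi) (add_Q_pos hy hi)
      (ih (s.erase i) x y (cone_erase hi k hx) (cone_erase hi k hy)).2

/-! ### The geometric mean -/

lemma prod_Q {s : Finset ι} (r : ℕ) {x : ι → ℝ} (h : Cone s r x) :
    ∏ k ∈ Finset.range r, Q s k x = E s r x := by
  induction r with
  | zero => simp [E_zero]
  | succ r ih =>
    rw [Finset.prod_range_succ, ih (h.mono (by omega)), Q,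
      mul_div_cancel₀ _ (h r (by omega)).ne']

/-- AM-GM with equal weights for a product over `range r`. -/
lemma prod_rpow_le {r : ℕ} (hr : 1 ≤ r) {u : ℕ → ℝ} (hu : ∀ k < r, 0 ≤ u k) :
    (∏ k ∈ Finset.range r, u k) ^ ((1 : ℝ) / r) ≤
      ∑ k ∈ Finset.range r, (1 : ℝ) / r * u k := by
  have hr0 : (r : ℝ) ≠ 0 := by positivity
  have h := Real.geom_mean_le_arith_mean_weighted (Finset.range r) (fun _ => (1 : ℝ) / r) u
    (fun _ _ => by positivity) (by simp [hr0]) (fun k hk => hu k (Finset.mem_range.1 hk))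
  rwa [Real.finsetProd_rpow _ _ (fun k hk => hu k (Finset.mem_range.1 hk))] at h

lemma rpow_superadd [DecidableEq ι] {s : Finset ι} {r : ℕ} (hr : 1 ≤ r) {x y : ι → ℝ}
    (hx : Cone s r x) (hy : Cone s r y) :
    E s r x ^ ((1 : ℝ) / r) + E s r y ^ ((1 : ℝ) / r) ≤ E s r (x + y) ^ ((1 : ℝ) / r) := by
  have hxy : Cone s r (x + y) := (cone_add_and_ratio_superadd r s x y hx hy).1
  have pos : ∀ {z : ι → ℝ}, Cone s r z → ∀ k < r, 0 < Q s k z := fun hz k hk =>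
    div_pos (hz _ (by omega)) (hz _ (by omega))
  have key : ∀ {z : ι → ℝ}, Cone s r z →
      E s r z ^ ((1 : ℝ) / r) / E s r (x + y) ^ ((1 : ℝ) / r) ≤
        ∑ k ∈ Finset.range r, (1 : ℝ) / r * (Q s k z / Q s k (x + y)) := by
    intro z hz
    rw [← Real.div_rpow (hz r le_rfl).le (hxy r le_rfl).le, ← prod_Q r hz, ← prod_Q r hxy,
      ← Finset.prod_div_distrib]
    exact prod_rpow_le hr fun k hk => (div_pos (pos hz k hk) (pos hxy k hk)).le
  have hE : 0 < E s r (x + y) ^ ((1 : ℝ) / r) := Real.rpow_pos_of_pos (hxy r le_rfl) _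
  rw [← div_le_one hE, add_div]
  refine (add_le_add (key hx) (key hy)).trans ?_
  rw [← Finset.sum_add_distrib]
  have hr0 : (r : ℝ) ≠ 0 := by positivity
  calc _ ≤ ∑ k ∈ Finset.range r, (1 : ℝ) / r := by
        refine Finset.sum_le_sum fun k hk => ?_
        have hk := Finset.mem_range.1 hk
        rw [← mul_add, ← add_div]
        refine mul_le_of_le_one_right (by positivity) ((div_le_one (pos hxy k hk)).2 ?_)
        exact (cone_add_and_ratio_superadd k s x y (hx.mono hk.le) (hy.mono hk.le)).2
    _ = 1 := by simp [hr0]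

/-! ### Transfer to `fcurv` -/

lemma esymm_eq_E (n r : ℕ) (x : Fin n → ℝ) : esymm n r x = E Finset.univ r x :=
  (E_eq_sum _ _ _).symm

lemma cone_of_mem {n r : ℕ} {x : Fin n → ℝ} (h : x ∈ gardingCone n r) :
    Cone Finset.univ r x := by
  intro k hk
  rcases Nat.eq_zero_or_pos k with rfl | hk0
  · simp [E_zero]
  · rw [← esymm_eq_E]
    exact h k hk0 hk

lemma esymm_smul (n r : ℕ) (t : ℝ) (x : Fin n → ℝ) : esymm n r (t • x) = t ^ r * esymm n r x := by
  unfold esymm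
  rw [Finset.mul_sum]
  refine Finset.sum_congr rfl fun s hs => ?_
  simp [Finset.prod_mul_distrib, (Finset.mem_powersetCard.1 hs).2]

lemma smul_mem {n r : ℕ} {x : Fin n → ℝ} (h : x ∈ gardingCone n r) {t : ℝ} (ht : 0 < t) :
    t • x ∈ gardingCone n r := by
  intro k h1 h2
  rw [esymm_smul]
  exact mul_pos (pow_pos ht k) (h k h1 h2)

lemma fcurv_smul {n r : ℕ} (hr : 1 ≤ r) {x : Fin n → ℝ} (h : x ∈ gardingCone n r) {t : ℝ}
    (ht : 0 ≤ t) : fcurv n r (t • x) = t * fcurv n r x := by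
  have h0 := h r hr le_rfl
  unfold fcurv
  rw [esymm_smul, mul_div_assoc, Real.mul_rpow (by positivity) (by positivity), one_div,
    Real.pow_rpow_inv_natCast ht (by omega)]

lemma fcurv_superadd {n r : ℕ} (hr : 1 ≤ r) {x y : Fin n → ℝ}
    (hx : x ∈ gardingCone n r) (hy : y ∈ gardingCone n r) :
    fcurv n r x + fcurv n r y ≤ fcurv n r (x + y) := by
  have hx' := cone_of_mem hx
  have hy' := cone_of_mem hy
  have hxy := (cone_add_and_ratio_superadd r _ x y hx' hy').1
  unfold fcurv
  simp only [esymm_eq_E]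
  rw [Real.div_rpow (hx' r le_rfl).le (by positivity),
    Real.div_rpow (hy' r le_rfl).le (by positivity),
    Real.div_rpow (hxy r le_rfl).le (by positivity), ← add_div]
  gcongr
  exact rpow_superadd hr hx' hy'

end Garding

/-- For `n ≥ 1` and `1 ≤ r ≤ n`, the function `f(λ) = H_r(λ)^{1/r}` is concave on the
Gårding cone `Γ_r`: for all `λ, μ ∈ Γ_r` and `t ∈ [0,1]`,
`f(tλ + (1−t)μ) ≥ t f(λ) + (1−t) f(μ)`. -/
theorem fcurv_concaveOn (n r : ℕ) (hn : 1 ≤ n) (hr1 : 1 ≤ r) (hrn : r ≤ n) :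
    ∀ x ∈ gardingCone n r, ∀ y ∈ gardingCone n r, ∀ t : ℝ, t ∈ Set.Icc (0 : ℝ) 1 →
      t * fcurv n r x + (1 - t) * fcurv n r y ≤ fcurv n r (t • x + (1 - t) • y) := by
  intro x hx y hy t ht
  -- At the endpoints one of the scaled vectors is `0`, which is outside the cone.
  rcases ht.1.eq_or_lt with h0 | h0
  · simp [← h0]
  rcases ht.2.eq_or_lt with h1 | h1
  · simp [h1]
  have h1' : 0 < 1 - t := by linarith
  rw [← Garding.fcurv_smul hr1 hx h0.le, ← Garding.fcurv_smul hr1 hy h1'.le]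
  exact Garding.fcurv_superadd hr1 (Garding.smul_mem hx h0) (Garding.smul_mem hy h1')
end

section
/- (Ivochkina's inequality.) Let n ≥ 2, 1 < r ≤ n, and 0 < ψ₀ ≤ ψ₁. Set f(λ) = H_r(λ)^{1/r} and f_i = ∂f/∂λ_i. There exists a constant C₀ > 0, depending only on n, r, ψ₀ and ψ₁, such that for every λ ∈ Γ_r with ψ₀ ≤ f(λ) ≤ ψ₁ and every index j ∈ {1,…,n}: ∑_{i=1}^n f_i(λ) λ_i² ≤ C₀ ( max(λ_j, 0) + ∑_{k ≠ j} f_k(λ) λ_k² ). -/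
/-! ### Elementary symmetric functions of subfamilies -/

open Polynomial in
/-- The generating polynomial `∏_{i ∈ s} (1 + x_i X)` of the elementary symmetric functions of
the family `x` restricted to `s`. -/
noncomputable def genPoly {n : ℕ} (x : Fin n → ℝ) (s : Finset (Fin n)) : ℝ[X] :=
  ∏ i ∈ s, (1 + C (x i) * X)

/-- The `k`-th elementary symmetric function of the variables `x_i`, `i ∈ s`. -/
noncomputable def es {n : ℕ} (x : Fin n → ℝ) (s : Finset (Fin n)) (k : ℕ) : ℝ :=
  (genPoly x s).coeff k

section Polynomials
open Polynomial

theorem esymm_eq_es (n r : ℕ) (x : Fin n → ℝ) : esymm n r x = es x Finset.univ r := by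
  have h : ∀ t : Finset (Fin n),
      (∏ i ∈ t, (C (x i) * X : ℝ[X])).coeff r = if t.card = r then ∏ i ∈ t, x i else 0 := by
    intro t
    rw [Finset.prod_mul_distrib, Finset.prod_const, ← map_prod, coeff_C_mul, coeff_X_pow]
    by_cases ht : t.card = r
    · simp [ht]
    · simp [ht, Ne.symm ht]
  rw [es, genPoly, Finset.prod_one_add, finsetSum_coeff, esymm, Finset.powersetCard_eq_filter,
    Finset.sum_filter]
  exact Finset.sum_congr rfl fun t _ => (h t).symm

theorem es_zero {n : ℕ} (x : Fin n → ℝ) (s : Finset (Fin n)) : es x s 0 = 1 := by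
  simp [es, genPoly, coeff_zero_prod]

theorem es_split {n : ℕ} (x : Fin n → ℝ) {s : Finset (Fin n)} {j : Fin n} (hj : j ∈ s) (k : ℕ) :
    es x s (k + 1) = x j * es x (s.erase j) k + es x (s.erase j) (k + 1) := by
  rw [es, es, es, genPoly, genPoly, ← Finset.mul_prod_erase s _ hj, add_mul, one_mul, coeff_add,
    mul_assoc, coeff_C_mul, coeff_X_mul, add_comm]

theorem es_congr {n : ℕ} {x y : Fin n → ℝ} {s : Finset (Fin n)} (h : ∀ i ∈ s, x i = y i) (k : ℕ) :
    es x s k = es y s k := by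
  rw [es, es, genPoly, genPoly]
  congr 1
  exact Finset.prod_congr rfl fun i hi => by rw [h i hi]

/-- Euler's identity for `S_{k+1}`, written with the partial derivatives `S_k(x | i)`; it is the
`k`-th coefficient of the derivative of the generating polynomial. -/
theorem es_euler {n : ℕ} (x : Fin n → ℝ) (s : Finset (Fin n)) (k : ℕ) :
    ∑ i ∈ s, x i * es x (s.erase i) k = (k + 1) * es x s (k + 1) := by
  have h := congrArg (fun p => coeff p k)
    (derivative_prod_finset (s := s) (f := fun i => (1 + C (x i) * X : ℝ[X])))
  simp only [coeff_derivative, finsetSum_coeff] at h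
  rw [mul_comm]
  refine Eq.trans ?_ h.symm
  refine Finset.sum_congr rfl fun i _ => ?_
  rw [derivative_add, derivative_one, zero_add, derivative_C_mul_X, coeff_mul_C, mul_comm, es,
    genPoly]

/-- The normal form of the quantity to be controlled:
`∑ S_r(x | i) x_i² = S_1 S_{r+1} - (r+2) S_{r+2}`. -/
theorem es_sum_sq {n : ℕ} (x : Fin n → ℝ) (s : Finset (Fin n)) (k : ℕ) :
    ∑ i ∈ s, es x (s.erase i) k * x i ^ 2 =
      es x s 1 * es x s (k + 1) - (k + 2) * es x s (k + 2) := by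
  have h1 := es_euler x s 0
  have h2 := es_euler x s (k + 1)
  simp only [es_zero] at h1
  push_cast at h1 h2
  have h3 : ∑ i ∈ s, es x (s.erase i) k * x i ^ 2 =
      (∑ i ∈ s, x i * 1) * es x s (k + 1) - ∑ i ∈ s, x i * es x (s.erase i) (k + 1) := by
    rw [Finset.sum_mul, ← Finset.sum_sub_distrib]
    refine Finset.sum_congr rfl fun i hi => ?_
    rw [es_split x hi k]
    ring
  rw [h3, h1, h2]
  ring

/-! ### Real-rooted polynomials and Newton's inequality -/

/-- By Rolle's theorem, the derivative of a real-rooted polynomial is real-rooted. -/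
theorem splits_derivative {p : ℝ[X]} (hp : p.Splits) : (derivative p).Splits := by
  rw [splits_iff_card_roots] at hp ⊢
  have h1 := card_roots_le_derivative p
  have h2 := card_roots' (derivative p)
  have h3 := natDegree_derivative_le p
  omega

theorem splits_iterate_derivative {p : ℝ[X]} (hp : p.Splits) (k : ℕ) :
    (derivative^[k] p).Splits := by
  induction k with
  | zero => exact hp
  | succ k ih => rw [Function.iterate_succ_apply']; exact splits_derivative ih

/-- Laguerre's inequality `(N + 1) p p'' ≤ N p'²` at the origin, for a product of at most
`N + 1` monic linear factors. -/
theorem laguerre_multiset (N : ℕ) (m : Multiset ℝ) (hm : Multiset.card m ≤ N + 1) :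
    2 * ((N : ℝ) + 1) * (m.map (X - C ·)).prod.coeff 0 * (m.map (X - C ·)).prod.coeff 2 ≤
      (N : ℝ) * (m.map (X - C ·)).prod.coeff 1 ^ 2 := by
  induction m using Multiset.induction_on generalizing N with
  | empty => simp [coeff_one]
  | cons a m ih =>
    rw [Multiset.card_cons] at hm
    rw [Multiset.map_cons, Multiset.prod_cons]
    rcases N with _ | N
    · have : m = 0 := Multiset.card_eq_zero.mp (by omega)
      subst this
      simp [coeff_X, coeff_C]
    · have h := ih N (by omega)
      set q := (m.map (X - C ·)).prod
      have e0 : ((X - C a) * q).coeff 0 = -(a * q.coeff 0) := by simp [sub_mul]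
      have e1 : ((X - C a) * q).coeff 1 = q.coeff 0 - a * q.coeff 1 := by
        simp [sub_mul, coeff_X_mul q 0]
      have e2 : ((X - C a) * q).coeff 2 = q.coeff 1 - a * q.coeff 2 := by
        simp [sub_mul, coeff_X_mul q 1]
      rw [e0, e1, e2]
      push_cast
      have hN : (0 : ℝ) < N + 1 := by positivity
      -- The defect, multiplied by `N + 1`, is a multiple of the inductive defect plus a square.
      have key := mul_le_mul_of_nonneg_left h (by positivity : 0 ≤ ((N : ℝ) + 2) * a ^ 2)
      have sq := sq_nonneg (a * q.coeff 1 + (N + 1) * q.coeff 0)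
      refine le_of_mul_le_mul_left ?_ hN
      nlinarith

/-- Laguerre's inequality at the origin for a real-rooted polynomial of degree at most `N + 1`. -/
theorem laguerre {p : ℝ[X]} (hp : p.Splits) (N : ℕ) (hN : p.natDegree ≤ N + 1) :
    2 * ((N : ℝ) + 1) * p.coeff 0 * p.coeff 2 ≤ N * p.coeff 1 ^ 2 := by
  have h := laguerre_multiset N p.roots (by rw [← hp.natDegree_eq_card_roots]; exact hN)
  rw [hp.eq_prod_roots]
  simp only [coeff_C_mul]
  have := mul_le_mul_of_nonneg_left h (sq_nonneg p.leadingCoeff)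
  nlinarith

theorem genPoly_splits {n : ℕ} (x : Fin n → ℝ) (s : Finset (Fin n)) : (genPoly x s).Splits := by
  refine Splits.prod fun i _ => Splits.of_natDegree_le_one ?_
  compute_degree

theorem natDegree_genPoly_le {n : ℕ} (x : Fin n → ℝ) (s : Finset (Fin n)) :
    (genPoly x s).natDegree ≤ s.card := by
  refine (natDegree_prod_le _ _).trans ?_
  refine (Finset.sum_le_card_nsmul s _ 1 fun i _ => ?_).trans (by simp)
  compute_degree

/-- Newton's inequality, in a form where the number of variables enters only through the upper
bound `N + 1`. -/
theorem es_newton {n : ℕ} (x : Fin n → ℝ) (s : Finset (Fin n)) (N : ℕ) (hN : s.card ≤ N + 1)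
    (k : ℕ) :
    (N + 1) * (k + 2) * es x s (k + 2) * es x s k ≤ N * (k + 1) * es x s (k + 1) ^ 2 := by
  have hd : (derivative^[k] (genPoly x s)).natDegree ≤ N + 1 :=
    ((natDegree_iterate_derivative _ k).trans (Nat.sub_le _ _)).trans
      ((natDegree_genPoly_le x s).trans hN)
  have h := laguerre (splits_iterate_derivative (genPoly_splits x s) k) N hd
  simp only [coeff_iterate_derivative, nsmul_eq_mul] at h
  have d0 : ((0 + k).descFactorial k : ℝ) = k.factorial := by
    rw [zero_add, Nat.descFactorial_self]
  have d1 : ((1 + k).descFactorial k : ℝ) = (k + 1) * k.factorial := by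
    have := Nat.factorial_mul_descFactorial (n := 1 + k) (k := k) (by omega)
    rw [Nat.add_sub_cancel, Nat.factorial_one, one_mul, add_comm, Nat.factorial_succ] at this
    rw [add_comm, this]
    push_cast
    ring
  have d2 : 2 * ((2 + k).descFactorial k : ℝ) = (k + 2) * ((k + 1) * k.factorial) := by
    have := Nat.factorial_mul_descFactorial (n := 2 + k) (k := k) (by omega)
    rw [Nat.add_sub_cancel, Nat.factorial_two, add_comm, Nat.factorial_succ,
      Nat.factorial_succ] at this
    rw [add_comm 2 k]
    exact_mod_cast this
  rw [d0, d1, zero_add, add_comm 1 k, add_comm 2 k] at h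
  rw [add_comm 2 k] at d2
  change _ * ((k.factorial : ℝ) * es x s k) * (_ * es x s (k + 2)) ≤
    _ * (_ * es x s (k + 1)) ^ 2 at h
  have hf : (0 : ℝ) < (k + 1) * (k.factorial : ℝ) ^ 2 := by positivity
  refine le_of_mul_le_mul_left ?_ hf
  calc _ = (N + 1) * (k.factorial * es x s k) *
        (((k + 2) * ((k + 1) * k.factorial)) * es x s (k + 2)) := by ring
    _ = _ := by rw [← d2]; ring
    _ ≤ _ := h
    _ = _ := by ring

end Polynomials

/-! ### The inequality for elementary symmetric functions -/

/-- Deleting a variable maps `Γ_r` into `Γ_{r-1}`. If `S_{k+1}(x | j) ≤ 0` were the first failure,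
then `S_{k+1}(x) > 0` and `S_{k+2}(x) > 0` would force
`S_k(x | j) S_{k+2}(x | j) > S_{k+1}(x | j)²`, against Newton's inequality. -/
theorem es_erase_pos {n : ℕ} (x : Fin n → ℝ) {s : Finset (Fin n)} {j : Fin n} (hj : j ∈ s) (r : ℕ)
    (h : ∀ k ≤ r, 0 < es x s (k + 1)) : ∀ k ≤ r, 0 < es x (s.erase j) k := by
  intro k
  induction k with
  | zero => intro _; rw [es_zero]; exact one_pos
  | succ k ih =>
    intro hk
    have hA := ih (by omega)
    have h1 := h k (by omega)
    have h2 := h (k + 1) hk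
    have hN := es_newton x (s.erase j) n ((Finset.card_le_univ _).trans (by simp)) k
    rw [es_split x hj] at h1 h2
    set A := es x (s.erase j) k
    set B := es x (s.erase j) (k + 1)
    set D := es x (s.erase j) (k + 2)
    by_contra hB
    push Not at hB
    change 0 < x j * B + D at h2
    have ht : 0 < x j := by
      by_contra ht
      push Not at ht
      nlinarith
    have hD : 0 < D := by nlinarith
    have hDA : B ^ 2 < D * A := by
      by_cases hB0 : B = 0
      · rw [hB0]; nlinarith [mul_pos hD hA]
      · have hB' : B < 0 := lt_of_le_of_ne hB hB0
        nlinarith [mul_pos h1 (neg_pos.mpr hB'), mul_pos h2 hA]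
    have c1 : (n : ℝ) * (k + 1) * B ^ 2 ≤ n * (k + 1) * (D * A) :=
      mul_le_mul_of_nonneg_left hDA.le (by positivity)
    have c2 : 0 < (n + k + 2 : ℝ) * (D * A) := by positivity
    nlinarith

/-- The ratios `(k+1) S_{k+1} / S_k` decrease, so they are bounded by the first one, `S_1`. -/
theorem es_succ_le {n : ℕ} (x : Fin n → ℝ) (s : Finset (Fin n)) (r : ℕ)
    (h : ∀ k ≤ r, 0 < es x s k) : ∀ k ≤ r, (k + 1) * es x s (k + 1) ≤ es x s 1 * es x s k := by
  intro k
  induction k with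
  | zero => intro _; simp [es_zero]
  | succ k ih =>
    intro hk
    have hA := h k (by omega)
    have hB := h (k + 1) hk
    have i1 := ih (by omega)
    have hN := es_newton x s n ((Finset.card_le_univ _).trans (by simp)) k
    have c := mul_le_mul_of_nonneg_right i1 hB.le
    have hN' : ((k : ℝ) + 2) * es x s (k + 2) * es x s k ≤ (k + 1) * es x s (k + 1) ^ 2 := by
      have hn : (0 : ℝ) < n + 1 := by positivity
      refine le_of_mul_le_mul_left ?_ hn
      have : 0 ≤ ((k : ℝ) + 1) * es x s (k + 1) ^ 2 := by positivity
      nlinarith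
    refine le_of_mul_le_mul_right ?_ hA
    push_cast
    nlinarith

/-- The algebraic form of the inequality, with `S_{r+1}(x | i)` in place of `f_i`. -/
theorem es_ivochkina {n : ℕ} (x : Fin n → ℝ) (r : ℕ)
    (h : ∀ k ≤ r + 1, 0 < es x Finset.univ (k + 1)) (j : Fin n) :
    es x (Finset.univ.erase j) (r + 1) * x j ^ 2 ≤
      (n + 1) * ∑ k ∈ Finset.univ.erase j, es x (Finset.univ.erase k) (r + 1) * x k ^ 2 +
        es x Finset.univ (r + 2) * max (x j) 0 := by
  have hj := Finset.mem_univ j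
  have hpos := es_erase_pos x hj (r + 1) h
  have hS := h (r + 1) le_rfl
  have hN := es_newton x (Finset.univ.erase j) n ((Finset.card_le_univ _).trans (by simp)) (r + 1)
  have hM := es_succ_le x _ (r + 1) hpos (r + 1) le_rfl
  have hQ := es_sum_sq x Finset.univ (r + 1)
  have hQ0 : 0 ≤ ∑ k ∈ Finset.univ.erase j, es x (Finset.univ.erase k) (r + 1) * x k ^ 2 :=
    Finset.sum_nonneg fun k _ => mul_nonneg
      (es_erase_pos x (Finset.mem_univ k) (r + 1) h (r + 1) le_rfl).le (sq_nonneg _)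
  rw [← Finset.add_sum_erase _ (fun k => es x (Finset.univ.erase k) (r + 1) * x k ^ 2) hj] at hQ
  generalize (∑ k ∈ Finset.univ.erase j, es x (Finset.univ.erase k) (r + 1) * x k ^ 2) = Q at *
  have p1 := hpos 1 (by omega)
  have pA := hpos (r + 1) le_rfl
  have s1 := es_split x hj 0
  have s2 := es_split x hj (r + 1)
  have s3 := es_split x hj (r + 2)
  rw [es_zero] at s1
  push_cast at hN hM hQ
  simp only [zero_add, add_assoc] at s1 s2 s3 hN hM hQ hS
  norm_num at s1 s2 s3 hN hM hQ hS
  rw [s1, s3] at hQ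
  generalize es x Finset.univ (r + 2) = S at *
  generalize es x (Finset.univ.erase j) 1 = a at *
  generalize es x (Finset.univ.erase j) (r + 1) = A at *
  generalize es x (Finset.univ.erase j) (r + 2) = B at *
  generalize es x (Finset.univ.erase j) (r + 3) = D at *
  generalize x j = t at *
  have hr : (0 : ℝ) ≤ r := by positivity
  have hn : (0 : ℝ) ≤ n := by positivity
  have hQ' : Q = a * S - (r + 2) * t * B - (r + 3) * D := by
    have e : t * S = t * (t * A + B) := by rw [s2]
    linear_combination hQ + e
  have haS := mul_pos p1 hS
  have hAt : A * t ^ 2 = t * S - t * B := by rw [s2]; ring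
  rcases le_or_gt t 0 with ht | ht
  · rw [max_eq_right ht, mul_zero, add_zero]
    have htA : t * A ≤ 0 := mul_nonpos_of_nonpos_of_nonneg ht pA.le
    have hB : 0 < B := by linarith
    have hD : (n + 1) * (r + 3) * D ≤ n * ((r + 2) * B * (-t) + a * S) := by
      refine le_of_mul_le_mul_right (hN.trans ?_) pA
      have e1 : (r + 2) * B * S ≤ a * A * S := mul_le_mul_of_nonneg_right hM hS.le
      have e2 : (r + 2) * B ^ 2 = (r + 2) * B * (-t) * A + (r + 2) * B * S := by rw [s2]; ring
      calc n * (r + 2) * B ^ 2 = n * ((r + 2) * B ^ 2) := by ring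
        _ ≤ n * ((r + 2) * B * (-t) * A + a * A * S) :=
          mul_le_mul_of_nonneg_left (by linarith) hn
        _ = _ := by ring
    have hBt : 0 ≤ B * (-t) := mul_nonneg hB.le (by linarith)
    have hrBt := mul_nonneg hr hBt
    have hSt : t * S ≤ 0 := mul_nonpos_of_nonpos_of_nonneg ht hS.le
    rw [hQ', hAt]
    nlinarith
  · rw [max_eq_left ht.le]
    rcases le_or_gt 0 B with hB | hB
    · have := mul_nonneg ht.le hB
      have := mul_nonneg (by positivity : (0 : ℝ) ≤ n + 1) hQ0
      linarith
    · have hD : (n + 1) * (r + 3) * D ≤ n * ((r + 2) * (-B) * t) := by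
        refine le_of_mul_le_mul_right (hN.trans ?_) pA
        have e1 : (r + 2) * (-B) * (-B) ≤ (r + 2) * (-B) * (t * A) :=
          mul_le_mul_of_nonneg_left (by linarith) (mul_nonneg (by linarith) (by linarith))
        calc n * (r + 2) * B ^ 2 = n * ((r + 2) * (-B) * (-B)) := by ring
          _ ≤ n * ((r + 2) * (-B) * (t * A)) := mul_le_mul_of_nonneg_left e1 hn
          _ = _ := by ring
      have hBt : 0 ≤ (-B) * t := mul_nonneg (by linarith) ht.le
      have hrBt := mul_nonneg hr hBt
      have hnaS := mul_nonneg hn haS.le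
      rw [hQ', hAt]
      nlinarith

/-! ### The derivatives of `f` and the conclusion -/

/-- `∂f/∂x_i = (1/r) H_r^{1/r - 1} S_{r-1}(x | i) / C(n,r)`, for `r = k + 1`. -/
theorem fderiv_fcurv {n k : ℕ} (x : Fin n → ℝ) (hx : 0 < esymm n (k + 1) x)
    (hk : k + 1 ≤ n) (i : Fin n) :
    fderiv ℝ (fcurv n (k + 1)) x (Pi.single i 1) =
      1 / ((k + 1 : ℕ) : ℝ) * (esymm n (k + 1) x / (n.choose (k + 1) : ℝ)) ^
        (1 / ((k + 1 : ℕ) : ℝ) - 1) / (n.choose (k + 1) : ℝ) *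
          es x (Finset.univ.erase i) k := by
  have hc : (0 : ℝ) < n.choose (k + 1) := by exact_mod_cast Nat.choose_pos hk
  have hpos : 0 < esymm n (k + 1) x / (n.choose (k + 1) : ℝ) := div_pos hx hc
  have hdiff : DifferentiableAt ℝ (fcurv n (k + 1)) x := by
    unfold fcurv
    refine DifferentiableAt.rpow_const ?_ (Or.inl hpos.ne')
    unfold esymm
    fun_prop
  rw [← hdiff.lineDeriv_eq_fderiv]
  refine HasLineDerivAt.lineDeriv ?_
  unfold HasLineDerivAt
  have hline : ∀ t : ℝ, esymm n (k + 1) (x + t • Pi.single i 1) =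
      (x i + t) * es x (Finset.univ.erase i) k + es x (Finset.univ.erase i) (k + 1) := by
    intro t
    have hcongr : ∀ l ∈ Finset.univ.erase i, (x + t • Pi.single i 1 : Fin n → ℝ) l = x l := by
      intro l hl
      simp [Finset.ne_of_mem_erase hl]
    rw [esymm_eq_es, es_split _ (Finset.mem_univ i), es_congr hcongr, es_congr hcongr]
    simp
  have hS : HasDerivAt (fun t : ℝ => esymm n (k + 1) (x + t • Pi.single i 1) /
      (n.choose (k + 1) : ℝ)) (es x (Finset.univ.erase i) k / (n.choose (k + 1) : ℝ)) 0 := by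
    simp only [hline]
    have := ((((hasDerivAt_id (0 : ℝ)).const_add (x i)).mul_const
      (es x (Finset.univ.erase i) k)).add_const
        (es x (Finset.univ.erase i) (k + 1))).div_const (n.choose (k + 1) : ℝ)
    simpa using this
  have h := hS.rpow_const (p := 1 / ((k + 1 : ℕ) : ℝ)) (Or.inl (by simpa using hpos.ne'))
  simp only [zero_smul, add_zero] at h
  unfold fcurv
  refine HasDerivAt.congr_deriv h ?_
  ring

/-- Ivochkina's inequality: for `n ≥ 2`, `1 < r ≤ n` and `0 < ψ₀ ≤ ψ₁`, there is a
constant `C₀ > 0` depending only on `n, r, ψ₀, ψ₁` such that for every `λ ∈ Γ_r` with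
`ψ₀ ≤ f(λ) ≤ ψ₁` and every index `j`:
`∑ᵢ fᵢ(λ) λᵢ² ≤ C₀ (max(λⱼ, 0) + ∑_{k ≠ j} f_k(λ) λ_k²)`,
where `fᵢ = ∂f/∂λᵢ` and `f = H_r^{1/r}`. -/
theorem ivochkina_inequality (n r : ℕ) (hn : 2 ≤ n) (hr1 : 1 < r) (hrn : r ≤ n)
    (ψ₀ ψ₁ : ℝ) (hψ₀ : 0 < ψ₀) (hψ : ψ₀ ≤ ψ₁) :
    ∃ C₀ : ℝ, 0 < C₀ ∧
      ∀ x ∈ gardingCone n r, ψ₀ ≤ fcurv n r x → fcurv n r x ≤ ψ₁ →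
        ∀ j : Fin n,
          ∑ i, fderiv ℝ (fcurv n r) x (Pi.single i 1) * (x i) ^ 2 ≤
            C₀ * (max (x j) 0 +
              ∑ k ∈ Finset.univ.erase j,
                fderiv ℝ (fcurv n r) x (Pi.single k 1) * (x k) ^ 2) := by
  obtain ⟨m, rfl⟩ : ∃ m, r = m + 2 := ⟨r - 2, by omega⟩
  have hψ₁ : 0 < ψ₁ := hψ₀.trans_le hψ
  refine ⟨n + 2 + ψ₁, by positivity, fun x hx _ hf j => ?_⟩
  have hS : 0 < esymm n (m + 2) x := hx (m + 2) (by omega) le_rfl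
  have hc : (0 : ℝ) < n.choose (m + 2) := by exact_mod_cast Nat.choose_pos hrn
  have hH : 0 < esymm n (m + 2) x / (n.choose (m + 2) : ℝ) := div_pos hS hc
  have hcone : ∀ k ≤ m + 1, 0 < es x Finset.univ (k + 1) := fun k hk => by
    rw [← esymm_eq_es]
    exact hx (k + 1) (by omega) (by omega)
  have main := es_ivochkina x m hcone j
  rw [← esymm_eq_es] at main
  simp only [fderiv_fcurv (k := m + 1) x hS hrn]
  set κ : ℝ := 1 / ((m + 1 + 1 : ℕ) : ℝ) * (esymm n (m + 1 + 1) x /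
    (n.choose (m + 1 + 1) : ℝ)) ^ (1 / ((m + 1 + 1 : ℕ) : ℝ) - 1) /
      (n.choose (m + 1 + 1) : ℝ) with hκ
  have hκ0 : 0 ≤ κ := by
    have := Real.rpow_nonneg hH.le (1 / ((m + 1 + 1 : ℕ) : ℝ) - 1)
    exact div_nonneg (mul_nonneg (by positivity) this) hc.le
  -- Euler's relation for the homogeneous function `f`: `κ S_r = f / r`.
  have hκS : κ * esymm n (m + 2) x ≤ ψ₁ := by
    have e : κ * esymm n (m + 2) x = 1 / ((m + 2 : ℕ) : ℝ) * fcurv n (m + 2) x := by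
      rw [hκ, Real.rpow_sub_one hH.ne', fcurv]
      have := hS.ne'
      have := hc.ne'
      field_simp
    have hf0 : 0 ≤ fcurv n (m + 2) x := Real.rpow_nonneg hH.le _
    have h1 : 1 / ((m + 2 : ℕ) : ℝ) ≤ 1 := by
      rw [div_le_one (by positivity)]
      exact_mod_cast (by omega : 1 ≤ m + 2)
    rw [e]
    exact (mul_le_of_le_one_left hf0 h1).trans hf
  have hQ0 : 0 ≤ ∑ k ∈ Finset.univ.erase j, es x (Finset.univ.erase k) (m + 1) * x k ^ 2 :=
    Finset.sum_nonneg fun k _ => mul_nonneg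
      (es_erase_pos x (Finset.mem_univ k) (m + 1) hcone (m + 1) le_rfl).le (sq_nonneg _)
  rw [← Finset.add_sum_erase _ _ (Finset.mem_univ j)]
  simp only [mul_assoc κ, ← Finset.mul_sum]
  generalize (∑ k ∈ Finset.univ.erase j, es x (Finset.univ.erase k) (m + 1) * x k ^ 2) = Q at *
  have hp : 0 ≤ max (x j) 0 := le_max_right _ _
  have a1 := mul_le_mul_of_nonneg_left main hκ0
  have a2 := mul_le_mul_of_nonneg_right hκS hp
  have a3 : 0 ≤ ψ₁ * (κ * Q) := by positivity
  have a4 : 0 ≤ ((n : ℝ) + 2) * max (x j) 0 := by positivity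
  linarith
end
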